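/- Let L, T > 0 and let f : ℝ → ℝ be twice continuously differentiable with f″ bounded on ℝ. Let u : [0,T] × ℝ → ℝ be smooth, L-periodic in x, with all partial derivatives bounded, solving ∂_t u + ∂_x f(u) − ∂_x² ∂_t u = 0. Then there exists C > 0 such that for every τ ∈ (0,1] and every C¹ triple q = (q₀, q₁, q₂), L-periodic in x, solving ∂_t q₀ + ∂_x f(q₀) + ∂_x q₂ = 0, ∂_t q₁ + τ ∂_x q₁ = −q₂, τ ∂_t q₂ + ∂_x q₀ = q₁ with initial data q₀(0,·) = u(0,·), q₁(0,·) = ∂_x u(0,·), q₂(0,·) = −∂_t ∂_x u(0,·), one has sup_{t ∈ [0,T]} ( ‖u(t,·) − q₀(t,·)‖_{L²(0,L)} + ‖∂_x u(t,·) − q₁(t,·)‖_{L²(0,L)} ) ≤ C τ. -/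

import Mathlib

open MeasureTheory

/-- Partial derivative with respect to the first (time) variable. -/
noncomputable def pdt (u : ℝ → ℝ → ℝ) : ℝ → ℝ → ℝ :=
  fun t x => deriv (fun s => u s x) t

/-- Partial derivative with respect to the second (space) variable. -/
noncomputable def pdx (u : ℝ → ℝ → ℝ) : ℝ → ℝ → ℝ :=
  fun t x => deriv (fun y => u t y) x

open Set Filter Topology

section PartialDerivatives

variable {v : ℝ → ℝ → ℝ}

lemma hasDerivAt_fst_fderiv (hv : Differentiable ℝ (Function.uncurry v)) (t x : ℝ) :
    HasDerivAt (fun s => v s x) (fderiv ℝ (Function.uncurry v) (t, x) (1, 0)) t :=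
  (hv (t, x)).hasFDerivAt.comp_hasDerivAt (f := fun s => (s, x)) t
    ((hasDerivAt_id t).prodMk (hasDerivAt_const t x))

lemma hasDerivAt_snd_fderiv (hv : Differentiable ℝ (Function.uncurry v)) (t x : ℝ) :
    HasDerivAt (fun y => v t y) (fderiv ℝ (Function.uncurry v) (t, x) (0, 1)) x :=
  (hv (t, x)).hasFDerivAt.comp_hasDerivAt x
    ((hasDerivAt_const x t).prodMk (hasDerivAt_id x))

lemma uncurry_pdt_eq (hv : Differentiable ℝ (Function.uncurry v)) :
    Function.uncurry (pdt v) = fun p => fderiv ℝ (Function.uncurry v) p (1, 0) :=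
  funext fun p => (hasDerivAt_fst_fderiv hv p.1 p.2).deriv

lemma uncurry_pdx_eq (hv : Differentiable ℝ (Function.uncurry v)) :
    Function.uncurry (pdx v) = fun p => fderiv ℝ (Function.uncurry v) p (0, 1) :=
  funext fun p => (hasDerivAt_snd_fderiv hv p.1 p.2).deriv

lemma hasDerivAt_pdt (hv : ContDiff ℝ 1 (Function.uncurry v)) (t x : ℝ) :
    HasDerivAt (fun s => v s x) (pdt v t x) t :=
  (hasDerivAt_fst_fderiv (hv.differentiable one_ne_zero) t x).differentiableAt.hasDerivAt

lemma hasDerivAt_pdx (hv : ContDiff ℝ 1 (Function.uncurry v)) (t x : ℝ) :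
    HasDerivAt (fun y => v t y) (pdx v t x) x :=
  (hasDerivAt_snd_fderiv (hv.differentiable one_ne_zero) t x).differentiableAt.hasDerivAt

lemma ContDiff.uncurry_pdt {m n : WithTop ℕ∞} (hv : ContDiff ℝ n (Function.uncurry v))
    (hmn : m + 1 ≤ n) : ContDiff ℝ m (Function.uncurry (pdt v)) := by
  have h1 : ContDiff ℝ 1 (Function.uncurry v) := hv.of_le (le_trans le_add_self hmn)
  rw [uncurry_pdt_eq (h1.differentiable one_ne_zero)]
  exact (hv.fderiv_right hmn).clm_apply contDiff_const

lemma ContDiff.uncurry_pdx {m n : WithTop ℕ∞} (hv : ContDiff ℝ n (Function.uncurry v))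
    (hmn : m + 1 ≤ n) : ContDiff ℝ m (Function.uncurry (pdx v)) := by
  have h1 : ContDiff ℝ 1 (Function.uncurry v) := hv.of_le (le_trans le_add_self hmn)
  rw [uncurry_pdx_eq (h1.differentiable one_ne_zero)]
  exact (hv.fderiv_right hmn).clm_apply contDiff_const

lemma pdx_pdt_comm (hv : ContDiff ℝ 2 (Function.uncurry v)) :
    pdx (pdt v) = pdt (pdx v) := by
  have hd : Differentiable ℝ (Function.uncurry v) := hv.differentiable two_ne_zero
  have hd' : Differentiable ℝ (fderiv ℝ (Function.uncurry v)) :=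
    (hv.fderiv_right (m := 1) (by norm_num)).differentiable one_ne_zero
  have ht : Differentiable ℝ (Function.uncurry (pdt v)) :=
    (hv.uncurry_pdt (m := 1) (by norm_num)).differentiable one_ne_zero
  have hx : Differentiable ℝ (Function.uncurry (pdx v)) :=
    (hv.uncurry_pdx (m := 1) (by norm_num)).differentiable one_ne_zero
  funext t x
  have h1 := congrFun (uncurry_pdx_eq ht) (t, x)
  have h2 := congrFun (uncurry_pdt_eq hx) (t, x)
  simp only [Function.uncurry_apply_pair] at h1 h2
  have happ : ∀ e : ℝ × ℝ, HasFDerivAt (fun p => fderiv ℝ (Function.uncurry v) p e)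
      ((fderiv ℝ (fderiv ℝ (Function.uncurry v)) (t, x)).flip e) (t, x) := fun e => by
    simpa using (hd' (t, x)).hasFDerivAt.clm_apply (hasFDerivAt_const e (t, x))
  rw [h1, h2, uncurry_pdt_eq hd, uncurry_pdx_eq hd, (happ _).fderiv, (happ _).fderiv]
  exact hv.contDiffAt.isSymmSndFDerivAt (by simp) _ _

lemma periodic_pdt {L : ℝ} (hv : ∀ t, Function.Periodic (v t) L) (t : ℝ) :
    Function.Periodic (pdt v t) L := fun x => by
  simp only [pdt, fun s => hv s x]

lemma periodic_pdx {L : ℝ} (hv : ∀ t, Function.Periodic (v t) L) (t : ℝ) :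
    Function.Periodic (pdx v t) L := fun x => by
  have h : (fun y => v t (y + L)) = fun y => v t y := funext (hv t)
  simp only [pdx]
  rw [← deriv_comp_add_const, h]

end PartialDerivatives

/-- Differentiation under the integral sign for an integrand that is jointly `C¹`. -/
lemma hasDerivAt_intervalIntegral_pdt {φ : ℝ → ℝ → ℝ} (hφ : ContDiff ℝ 1 (Function.uncurry φ))
    (a b t : ℝ) :
    HasDerivAt (fun s => ∫ x in a..b, φ s x) (∫ x in a..b, pdt φ t x) t := by
  have hc : Continuous (Function.uncurry (pdt φ)) :=
    (hφ.uncurry_pdt (m := 0) (by norm_num)).continuous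
  obtain ⟨B, hB⟩ := ((isCompact_closedBall t 1).prod
    (isCompact_uIcc (a := a) (b := b))).exists_bound_of_continuousOn hc.continuousOn
  have hsec : ∀ s, Continuous (φ s) := fun s =>
    hφ.continuous.comp (by fun_prop : Continuous fun x => (s, x))
  have hsec' : ∀ s, Continuous (pdt φ s) := fun s =>
    hc.comp (by fun_prop : Continuous fun x => (s, x))
  refine (intervalIntegral.hasDerivAt_integral_of_dominated_loc_of_deriv_le
    (F := φ) (F' := pdt φ) (bound := fun _ => B) (Metric.closedBall_mem_nhds t one_pos)
    (Eventually.of_forall fun s => (hsec s).aestronglyMeasurable)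
    ((hsec t).intervalIntegrable _ _) (hsec' t).aestronglyMeasurable
    (Eventually.of_forall fun x hx s hs => hB (s, x) ⟨hs, uIoc_subset_uIcc hx⟩)
    intervalIntegrable_const
    (Eventually.of_forall fun x _ s _ => hasDerivAt_pdt hφ s x)).2

lemma intervalIntegral_pdx_eq_zero {H : ℝ → ℝ → ℝ} (hH : ContDiff ℝ 1 (Function.uncurry H))
    {L : ℝ} (hper : ∀ t, Function.Periodic (H t) L) (t : ℝ) :
    ∫ x in (0 : ℝ)..L, pdx H t x = 0 := by
  have hc : Continuous (pdx H t) :=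
    (hH.uncurry_pdx (m := 0) (by norm_num)).continuous.comp
      (by fun_prop : Continuous fun x => (t, x))
  rw [intervalIntegral.integral_eq_sub_of_hasDerivAt (fun x _ => hasDerivAt_pdx hH t x)
    (hc.intervalIntegrable _ _), (hper t).eq, sub_self]

/-- Energy estimate for a density `φ` with flux `H` whose balance law has a source
controlled by `a φ + b`. -/
lemma integral_le_of_balance_law {L T a b : ℝ} (hL : 0 < L) (ha : 0 ≤ a) (hb : 0 ≤ b)
    {φ H : ℝ → ℝ → ℝ} (hφ : ContDiff ℝ 1 (Function.uncurry φ))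
    (hH : ContDiff ℝ 1 (Function.uncurry H)) (hper : ∀ t, Function.Periodic (H t) L)
    (hbal : ∀ t ∈ Icc 0 T, ∀ x, pdt φ t x + pdx H t x ≤ a * φ t x + b)
    (h0 : ∀ x, φ 0 x = 0) {t : ℝ} (ht : t ∈ Icc 0 T) :
    ∫ x in (0 : ℝ)..L, φ t x ≤ b * L * T * Real.exp (a * T) := by
  set Φ : ℝ → ℝ := fun s => ∫ x in (0 : ℝ)..L, φ s x with hΦ
  have hsec : ∀ {w : ℝ → ℝ → ℝ}, Continuous (Function.uncurry w) → ∀ s : ℝ,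
      IntervalIntegrable (w s) volume 0 L := fun hw s =>
    (hw.comp (by fun_prop : Continuous fun x => (s, x))).intervalIntegrable _ _
  have hct : Continuous (Function.uncurry (pdt φ)) :=
    (hφ.uncurry_pdt (m := 0) (by norm_num)).continuous
  have hcx : Continuous (Function.uncurry (pdx H)) :=
    (hH.uncurry_pdx (m := 0) (by norm_num)).continuous
  have hΦ' : ∀ s ∈ Icc 0 T, ∫ x in (0 : ℝ)..L, pdt φ s x ≤ a * Φ s + b * L := fun s hs => by
    calc ∫ x in (0 : ℝ)..L, pdt φ s x
        = ∫ x in (0 : ℝ)..L, (pdt φ s x + pdx H s x) := by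
          rw [intervalIntegral.integral_add (hsec hct s) (hsec hcx s),
            intervalIntegral_pdx_eq_zero hH hper, add_zero]
      _ ≤ ∫ x in (0 : ℝ)..L, (a * φ s x + b) :=
          intervalIntegral.integral_mono_on hL.le ((hsec hct s).add (hsec hcx s))
            (((hsec hφ.continuous s).const_mul a).add intervalIntegrable_const)
            fun x _ => hbal s hs x
      _ = a * Φ s + b * L := by
          rw [intervalIntegral.integral_add ((hsec hφ.continuous s).const_mul a)
            intervalIntegrable_const, intervalIntegral.integral_const_mul,
            intervalIntegral.integral_const, smul_eq_mul, sub_zero, mul_comm L b]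
  have hderiv : ∀ s, HasDerivAt (fun s => Real.exp (-(a * s)) * Φ s - b * L * s)
      (Real.exp (-(a * s)) * (∫ x in (0 : ℝ)..L, pdt φ s x)
        - a * Real.exp (-(a * s)) * Φ s - b * L) s := fun s => by
    have h1 : HasDerivAt (fun s => Real.exp (-(a * s))) (Real.exp (-(a * s)) * -a) s := by
      simpa using ((hasDerivAt_id s).const_mul a).neg.exp
    refine ((h1.mul (hasDerivAt_intervalIntegral_pdt hφ 0 L s)).sub
      ((hasDerivAt_id s).const_mul (b * L))).congr_deriv ?_
    ring
  have hanti : AntitoneOn (fun s => Real.exp (-(a * s)) * Φ s - b * L * s) (Icc 0 T) := by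
    refine antitoneOn_of_deriv_nonpos (convex_Icc 0 T)
      (fun s _ => (hderiv s).continuousAt.continuousWithinAt)
      (fun s _ => (hderiv s).differentiableAt.differentiableWithinAt) fun s hs => ?_
    have hs' := interior_subset hs
    rw [(hderiv s).deriv]
    have hexp : Real.exp (-(a * s)) ≤ 1 :=
      Real.exp_le_one_iff.2 (neg_nonpos.2 (mul_nonneg ha hs'.1))
    nlinarith [mul_le_mul_of_nonneg_left (hΦ' s hs') (Real.exp_pos (-(a * s))).le,
      mul_le_mul_of_nonneg_right hexp (mul_nonneg hb hL.le)]
  have hΦ0 : Φ 0 = 0 := by simp [hΦ, h0]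
  have hle := hanti (left_mem_Icc.2 (ht.1.trans ht.2)) ht ht.1
  simp only [hΦ0, mul_zero, sub_zero, sub_nonpos] at hle
  calc Φ t = Real.exp (a * t) * (Real.exp (-(a * t)) * Φ t) := by
        rw [← mul_assoc, ← Real.exp_add, add_neg_cancel, Real.exp_zero, one_mul]
    _ ≤ Real.exp (a * t) * (b * L * t) :=
        mul_le_mul_of_nonneg_left hle (Real.exp_pos _).le
    _ ≤ Real.exp (a * T) * (b * L * T) := by
        have hT : 0 ≤ T := ht.1.trans ht.2
        have htT : t ≤ T := ht.2
        have ht0 : 0 ≤ t := ht.1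
        gcongr
    _ = b * L * T * Real.exp (a * T) := by ring

lemma abs_taylor_remainder_le {f : ℝ → ℝ} (hf : ContDiff ℝ 2 f) {M : ℝ}
    (hM : ∀ x, |deriv (deriv f) x| ≤ M) (a b : ℝ) :
    |f b - f a - deriv f a * (b - a)| ≤ M * (b - a) ^ 2 := by
  have hd : Differentiable ℝ f := hf.differentiable two_ne_zero
  have hd' : Differentiable ℝ (deriv f) :=
    (ContDiff.iterate_deriv' 1 1 hf).differentiable one_ne_zero
  have hM0 : 0 ≤ M := (abs_nonneg _).trans (hM 0)
  have hlip : ∀ y, |deriv f y - deriv f a| ≤ M * |y - a| := fun y =>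
    convex_univ.norm_image_sub_le_of_norm_deriv_le (fun z _ => hd' z) (fun z _ => hM z)
      (mem_univ a) (mem_univ y)
  have hrem : ∀ y, HasDerivAt (fun y => f y - deriv f a * y) (deriv f y - deriv f a) y := fun y =>
    ((hd y).hasDerivAt.sub ((hasDerivAt_id y).const_mul (deriv f a))).congr_deriv (by simp)
  have hseg := (convex_uIcc a b).norm_image_sub_le_of_norm_hasDerivWithin_le
    (fun y _ => (hrem y).hasDerivWithinAt)
    (fun y hy => (hlip y).trans (mul_le_mul_of_nonneg_left (abs_sub_left_of_mem_uIcc hy) hM0))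
    left_mem_uIcc right_mem_uIcc
  rw [Real.norm_eq_abs, Real.norm_eq_abs, mul_assoc, ← sq, sq_abs] at hseg
  convert hseg using 2
  ring

lemma exists_contDiff_antiderivative {f : ℝ → ℝ} (hf : Continuous f) :
    ∃ F : ℝ → ℝ, ContDiff ℝ 1 F ∧ ∀ y, HasDerivAt F (f y) y := by
  have h : ∀ y, HasDerivAt (fun z => ∫ s in (0 : ℝ)..z, f s) (f y) y := fun y =>
    intervalIntegral.integral_hasDerivAt_right (hf.intervalIntegrable _ _)
      hf.aestronglyMeasurable.stronglyMeasurableAtFilter hf.continuousAt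
  refine ⟨_, contDiff_one_iff_deriv.2 ⟨fun y => (h y).differentiableAt, ?_⟩, h⟩
  rwa [funext fun y => (h y).deriv]

lemma energy_density_lower_bound {K τ g : ℝ} (hg : |g| ≤ K) (hτ : 0 < τ) (e₀ e₁ e₂ : ℝ) :
    e₀ ^ 2 + e₁ ^ 2 ≤
      4 * ((e₀ ^ 2 + e₁ ^ 2 + τ * e₂ ^ 2) / 2 + τ * (e₁ * g)) + 4 * K ^ 2 * τ ^ 2 := by
  have hg2 : (τ * g) ^ 2 ≤ (τ * K) ^ 2 :=
    sq_le_sq' (by nlinarith [neg_abs_le g]) (by nlinarith [le_abs_self g])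
  nlinarith [sq_nonneg (e₁ + 2 * (τ * g)), mul_nonneg hτ.le (sq_nonneg e₂), sq_nonneg e₀]

lemma energy_source_le {K M τ e₀ e₁ r v w g g' g'' : ℝ} (hK : 0 ≤ K) (hM : 0 ≤ M)
    (hτ : 0 < τ) (hτ1 : τ ≤ 1) (hr : |r| ≤ M * e₀ ^ 2) (hv : |v| ≤ K) (hw : |w| ≤ K)
    (hg : |g| ≤ K) (hg' : |g'| ≤ K) (hg'' : |g''| ≤ K) :
    -(v * r) - τ * e₁ * w - τ ^ 2 * (g * w) + τ * e₁ * g' + τ ^ 2 * (g'' * e₁) ≤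
      (K * M + 1) * (e₀ ^ 2 + e₁ ^ 2) + 4 * K ^ 2 * τ ^ 2 := by
  have hvr : -(v * r) ≤ K * (M * e₀ ^ 2) := by
    refine (neg_le_abs _).trans ?_
    rw [abs_mul]
    gcongr
  have hgw : -(g * w) ≤ K * K := by
    refine (neg_le_abs _).trans ?_
    rw [abs_mul]
    gcongr
  have hlin : |(-w + g' + τ * g'')| ≤ 3 * K := by
    have : |τ * g''| ≤ 1 * K := by
      rw [abs_mul, abs_of_pos hτ]
      gcongr
    calc |(-w + g' + τ * g'')| ≤ |-w| + |g'| + |τ * g''| := abs_add_three _ _ _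
      _ ≤ 3 * K := by rw [abs_neg]; linarith
  have hlin2 : (τ * (-w + g' + τ * g'')) ^ 2 ≤ τ ^ 2 * (3 * K) ^ 2 := by
    rw [mul_pow]
    exact mul_le_mul_of_nonneg_left (sq_le_sq' (abs_le.1 hlin).1 (abs_le.1 hlin).2) (sq_nonneg τ)
  nlinarith [sq_nonneg (e₁ - τ * (-w + g' + τ * g'') / 2),
    mul_le_mul_of_nonneg_left hgw (sq_nonneg τ), mul_nonneg (mul_nonneg hK hM) (sq_nonneg e₁),
    sq_nonneg e₀, sq_nonneg e₁, mul_nonneg (sq_nonneg τ) (sq_nonneg K)]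

/-- Convergence of the hyperbolic approximation to the generalized
Benjamin–Bona–Mahony equation (Theorem 2.1 of the paper, for classical
solutions of the hyperbolic approximation): the `L²(0,L)` errors of `q₀` and
`q₁` are `O(τ)` uniformly on `[0,T]`. -/
theorem bbm_hyperbolic_convergence
    (L T : ℝ) (hL : 0 < L) (hT : 0 < T)
    (f : ℝ → ℝ) (hf : ContDiff ℝ 2 f)
    (hf'' : ∃ M, ∀ x : ℝ, |deriv (deriv f) x| ≤ M)
    (u : ℝ → ℝ → ℝ) (hu : ContDiff ℝ (⊤ : ℕ∞) (Function.uncurry u))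
    (huper : ∀ t, Function.Periodic (u t) L)
    (hubd : ∀ i j : ℕ, ∃ M, ∀ t x : ℝ, |pdt^[i] (pdx^[j] u) t x| ≤ M)
    (hueq : ∀ t ∈ Set.Icc (0:ℝ) T, ∀ x : ℝ,
      pdt u t x + pdx (fun s y => f (u s y)) t x - pdx (pdx (pdt u)) t x = 0) :
    ∃ C > 0, ∀ τ ∈ Set.Ioc (0:ℝ) 1, ∀ q₀ q₁ q₂ : ℝ → ℝ → ℝ,
      ContDiff ℝ 1 (Function.uncurry q₀) →
      ContDiff ℝ 1 (Function.uncurry q₁) →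
      ContDiff ℝ 1 (Function.uncurry q₂) →
      (∀ t, Function.Periodic (q₀ t) L) →
      (∀ t, Function.Periodic (q₁ t) L) →
      (∀ t, Function.Periodic (q₂ t) L) →
      (∀ t ∈ Set.Icc (0:ℝ) T, ∀ x : ℝ,
        pdt q₀ t x + pdx (fun s y => f (q₀ s y)) t x + pdx q₂ t x = 0) →
      (∀ t ∈ Set.Icc (0:ℝ) T, ∀ x : ℝ,
        pdt q₁ t x + τ * pdx q₁ t x = - q₂ t x) →
      (∀ t ∈ Set.Icc (0:ℝ) T, ∀ x : ℝ,
        τ * pdt q₂ t x + pdx q₀ t x = q₁ t x) →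
      (∀ x : ℝ, q₀ 0 x = u 0 x) →
      (∀ x : ℝ, q₁ 0 x = pdx u 0 x) →
      (∀ x : ℝ, q₂ 0 x = - pdt (pdx u) 0 x) →
      ∀ t ∈ Set.Icc (0:ℝ) T,
        Real.sqrt (∫ x in (0:ℝ)..L, (u t x - q₀ t x) ^ 2)
          + Real.sqrt (∫ x in (0:ℝ)..L, (pdx u t x - q₁ t x) ^ 2)
          ≤ C * τ := by
  obtain ⟨M, hM⟩ := hf''
  have hM0 : 0 ≤ M := (abs_nonneg _).trans (hM 0)
  obtain ⟨F, hF, hF'⟩ := exists_contDiff_antiderivative hf.continuous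
  have hf1 : ContDiff ℝ 1 f := hf.of_le (by norm_num)
  have hfd : ∀ y, HasDerivAt f (deriv f y) y := fun y =>
    (hf.differentiable two_ne_zero y).hasDerivAt
  have htop : ((⊤ : ℕ∞) : WithTop ℕ∞) + 1 ≤ ((⊤ : ℕ∞) : WithTop ℕ∞) := by simp
  have hle : ∀ {n : ℕ}, (n : WithTop ℕ∞) ≤ ((⊤ : ℕ∞) : WithTop ℕ∞) := by
    intro n
    exact_mod_cast le_top
  obtain ⟨w, hwdef⟩ : ∃ w, w = pdx u := ⟨_, rfl⟩
  obtain ⟨z, hzdef⟩ : ∃ z, z = pdt w := ⟨_, rfl⟩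
  obtain ⟨g, hgdef⟩ : ∃ g, g = pdt z := ⟨_, rfl⟩
  have hw : ContDiff ℝ (⊤ : ℕ∞) (Function.uncurry w) := hwdef ▸ hu.uncurry_pdx htop
  have hz : ContDiff ℝ (⊤ : ℕ∞) (Function.uncurry z) := hzdef ▸ hw.uncurry_pdt htop
  have hg : ContDiff ℝ (⊤ : ℕ∞) (Function.uncurry g) := hgdef ▸ hz.uncurry_pdt htop
  have hwper : ∀ t, Function.Periodic (w t) L := hwdef ▸ periodic_pdx huper
  have hzper : ∀ t, Function.Periodic (z t) L := hzdef ▸ periodic_pdt hwper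
  have hgper : ∀ t, Function.Periodic (g t) L := hgdef ▸ periodic_pdt hzper
  have hzx : pdx (pdx (pdt u)) = pdx z := by
    rw [pdx_pdt_comm (hu.of_le hle), hzdef, hwdef]
  have hgx : pdx g = pdt (pdt (pdx w)) := by
    rw [hgdef, pdx_pdt_comm (hz.of_le hle), hzdef, pdx_pdt_comm (hw.of_le hle)]
  obtain ⟨K, hK0, hKw, hKwx, hKg, hKgt, hKgx⟩ : ∃ K : ℝ, 0 ≤ K ∧ (∀ t x, |w t x| ≤ K) ∧
      (∀ t x, |pdx w t x| ≤ K) ∧ (∀ t x, |g t x| ≤ K) ∧ (∀ t x, |pdt g t x| ≤ K) ∧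
      (∀ t x, |pdx g t x| ≤ K) := by
    obtain ⟨K₁, h₁⟩ := hubd 0 1
    obtain ⟨K₂, h₂⟩ := hubd 0 2
    obtain ⟨K₃, h₃⟩ := hubd 2 1
    obtain ⟨K₄, h₄⟩ := hubd 3 1
    obtain ⟨K₅, h₅⟩ := hubd 2 2
    simp only [Function.iterate_succ, Function.iterate_zero, Function.comp_apply, id]
      at h₁ h₂ h₃ h₄ h₅
    rw [hgx, hgdef, hzdef, hwdef]
    have p₁ := (abs_nonneg _).trans (h₁ 0 0)
    have p₂ := (abs_nonneg _).trans (h₂ 0 0)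
    have p₃ := (abs_nonneg _).trans (h₃ 0 0)
    have p₄ := (abs_nonneg _).trans (h₄ 0 0)
    have p₅ := (abs_nonneg _).trans (h₅ 0 0)
    exact ⟨K₁ + K₂ + K₃ + K₄ + K₅, by positivity,
      fun t x => (h₁ t x).trans (by linarith), fun t x => (h₂ t x).trans (by linarith),
      fun t x => (h₃ t x).trans (by linarith), fun t x => (h₄ t x).trans (by linarith),
      fun t x => (h₅ t x).trans (by linarith)⟩
  set a : ℝ := 4 * (K * M + 1) with ha
  have ha0 : 0 ≤ a := by positivity
  set D : ℝ := 4 * ((a + 4) * K ^ 2 * L * T * Real.exp (a * T)) + 4 * K ^ 2 * L with hD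
  have hD0 : 0 ≤ D := by positivity
  refine ⟨2 * √D + 1, by positivity, ?_⟩
  intro τ hτ q₀ q₁ q₂ hq₀ hq₁ hq₂ hper₀ hper₁ hper₂ heq₀ heq₁ heq₂ hi₀ hi₁ hi₂ t ht
  rw [← hwdef] at hi₁
  rw [← hwdef, ← hzdef] at hi₂
  rw [← hwdef]
  have hu1 : ContDiff ℝ 1 (Function.uncurry u) := hu.of_le (hle (n := 1))
  have hw1 : ContDiff ℝ 1 (Function.uncurry w) := hw.of_le (hle (n := 1))
  have hz1 : ContDiff ℝ 1 (Function.uncurry z) := hz.of_le (hle (n := 1))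
  have hg1 : ContDiff ℝ 1 (Function.uncurry g) := hg.of_le (hle (n := 1))
  let φ : ℝ → ℝ → ℝ := fun t x =>
    ((q₀ t x - u t x) ^ 2 + (q₁ t x - w t x) ^ 2 + τ * (q₂ t x + z t x) ^ 2) / 2
      + τ * ((q₁ t x - w t x) * g t x)
  let H : ℝ → ℝ → ℝ := fun t x =>
    (q₀ t x - u t x) * (f (q₀ t x) - f (u t x))
      - (F (q₀ t x) - F (u t x) - f (u t x) * (q₀ t x - u t x))
      + (q₀ t x - u t x) * (q₂ t x + z t x) + τ * (q₁ t x - w t x) ^ 2 / 2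
      + τ ^ 2 * (g t x * (q₁ t x - w t x))
  have hφ : ContDiff ℝ 1 (Function.uncurry φ) :=
    (((((hq₀.sub hu1).pow 2).add ((hq₁.sub hw1).pow 2)).add
      (contDiff_const.mul ((hq₂.add hz1).pow 2))).div_const 2).add
      (contDiff_const.mul ((hq₁.sub hw1).mul hg1))
  have hH : ContDiff ℝ 1 (Function.uncurry H) :=
    ((((((hq₀.sub hu1).mul ((hf1.comp hq₀).sub (hf1.comp hu1))).sub
      (((hF.comp hq₀).sub (hF.comp hu1)).sub ((hf1.comp hu1).mul (hq₀.sub hu1)))).add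
      ((hq₀.sub hu1).mul (hq₂.add hz1))).add
      ((contDiff_const.mul ((hq₁.sub hw1).pow 2)).div_const 2)).add
      (contDiff_const.mul (hg1.mul (hq₁.sub hw1))))
  have hHper : ∀ t, Function.Periodic (H t) L := fun t x => by
    simp only [H, hper₀ t x, hper₁ t x, hper₂ t x, huper t x, hwper t x, hzper t x, hgper t x]
  have hφ0 : ∀ x, φ 0 x = 0 := fun x => by
    simp [φ, hi₀, hi₁, hi₂]
  have hlower : ∀ s x, (q₀ s x - u s x) ^ 2 + (q₁ s x - w s x) ^ 2 ≤
      4 * φ s x + 4 * K ^ 2 * τ ^ 2 := fun s x =>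
    energy_density_lower_bound (hKg s x) hτ.1 _ _ _
  have hbal : ∀ s ∈ Icc 0 T, ∀ x, pdt φ s x + pdx H s x ≤
      a * φ s x + (a + 4) * K ^ 2 * τ ^ 2 := fun s hs x => by
    have hφt : pdt φ s x = (q₀ s x - u s x) * (pdt q₀ s x - pdt u s x)
        + (q₁ s x - w s x) * (pdt q₁ s x - z s x) + τ * (q₂ s x + z s x) * (pdt q₂ s x + g s x)
        + τ * ((pdt q₁ s x - z s x) * g s x + (q₁ s x - w s x) * pdt g s x) := by
      have d₀ := (hasDerivAt_pdt hq₀ s x).sub (hasDerivAt_pdt hu1 s x)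
      have d₁ := (hasDerivAt_pdt hq₁ s x).sub (hasDerivAt_pdt hw1 s x)
      have d₂ := (hasDerivAt_pdt hq₂ s x).add (hasDerivAt_pdt hz1 s x)
      rw [← hzdef] at d₁
      rw [← hgdef] at d₂
      have hd := ((((d₀.pow 2).add (d₁.pow 2)).add ((d₂.pow 2).const_mul τ)).div_const 2).add
        ((d₁.mul (hasDerivAt_pdt hg1 s x)).const_mul τ)
      refine (hd.congr_deriv ?_).deriv
      simp only [Pi.sub_apply, Pi.add_apply]
      push_cast
      ring
    have hHx : pdx H s x = (q₀ s x - u s x) * (deriv f (q₀ s x) * pdx q₀ s x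
          - deriv f (u s x) * w s x)
        - w s x * (f (q₀ s x) - f (u s x) - deriv f (u s x) * (q₀ s x - u s x))
        + (pdx q₀ s x - w s x) * (q₂ s x + z s x) + (q₀ s x - u s x) * (pdx q₂ s x + pdx z s x)
        + τ * (q₁ s x - w s x) * (pdx q₁ s x - pdx w s x)
        + τ ^ 2 * (pdx g s x * (q₁ s x - w s x) + g s x * (pdx q₁ s x - pdx w s x)) := by
      have c₀ := hasDerivAt_pdx hq₀ s x
      have cu := hasDerivAt_pdx hu1 s x
      rw [← hwdef] at cu
      have d₀ := c₀.sub cu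
      have d₁ := (hasDerivAt_pdx hq₁ s x).sub (hasDerivAt_pdx hw1 s x)
      have d₂ := (hasDerivAt_pdx hq₂ s x).add (hasDerivAt_pdx hz1 s x)
      have df₀ := (hfd (q₀ s x)).comp x c₀
      have dfu := (hfd (u s x)).comp x cu
      have dF₀ := (hF' (q₀ s x)).comp x c₀
      have dFu := (hF' (u s x)).comp x cu
      have hd := ((((d₀.mul (df₀.sub dfu)).sub ((dF₀.sub dFu).sub (dfu.mul d₀))).add
        (d₀.mul d₂)).add (((d₁.pow 2).const_mul τ).div_const 2)).add
        (((hasDerivAt_pdx hg1 s x).mul d₁).const_mul (τ ^ 2))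
      refine (hd.congr_deriv ?_).deriv
      simp only [Pi.sub_apply, Pi.add_apply, Function.comp_apply]
      push_cast
      ring
    have hfq : pdx (fun s y => f (q₀ s y)) s x = deriv f (q₀ s x) * pdx q₀ s x :=
      ((hfd (q₀ s x)).comp x (hasDerivAt_pdx hq₀ s x)).deriv
    have hfu : pdx (fun s y => f (u s y)) s x = deriv f (u s x) * w s x := by
      rw [hwdef]
      exact ((hfd (u s x)).comp x (hasDerivAt_pdx hu1 s x)).deriv
    have E₀ := heq₀ s hs x
    have E₁ := heq₁ s hs x
    have E₂ := heq₂ s hs x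
    have Eu := hueq s hs x
    rw [hfq] at E₀
    rw [hfu, hzx] at Eu
    have hsource := energy_source_le (e₁ := q₁ s x - w s x) hK0 hM0 hτ.1 hτ.2
      (abs_taylor_remainder_le hf hM (u s x) (q₀ s x)) (hKw s x) (hKwx s x) (hKg s x)
      (hKgt s x) (hKgx s x)
    have hid : pdt φ s x + pdx H s x =
        -(w s x * (f (q₀ s x) - f (u s x) - deriv f (u s x) * (q₀ s x - u s x)))
        - τ * (q₁ s x - w s x) * pdx w s x - τ ^ 2 * (g s x * pdx w s x)
        + τ * (q₁ s x - w s x) * pdt g s x + τ ^ 2 * (pdx g s x * (q₁ s x - w s x)) := by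
      rw [hφt, hHx]
      linear_combination (q₀ s x - u s x) * (E₀ - Eu) + (q₁ s x - w s x + τ * g s x) * E₁
        + (q₂ s x + z s x) * E₂
    have hlow := mul_le_mul_of_nonneg_left (hlower s x) (by positivity : 0 ≤ K * M + 1)
    rw [hid, ha]
    linarith
  have hint := integral_le_of_balance_law hL ha0 (by positivity) hφ hH hHper hbal hφ0 ht
  have hcont : ∀ {v : ℝ → ℝ → ℝ}, ContDiff ℝ 1 (Function.uncurry v) → Continuous (v t) :=
    fun hv => hv.continuous.comp (by fun_prop : Continuous fun x => (t, x))
  have hbound : ∫ x in (0 : ℝ)..L, (4 * φ t x + 4 * K ^ 2 * τ ^ 2) ≤ D * τ ^ 2 := by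
    rw [intervalIntegral.integral_add (((hcont hφ).intervalIntegrable _ _).const_mul 4)
      intervalIntegrable_const, intervalIntegral.integral_const_mul,
      intervalIntegral.integral_const, smul_eq_mul, sub_zero, hD]
    linarith
  have hsqrt : ∀ v : ℝ → ℝ, Continuous v → (∀ x, v x ^ 2 ≤ 4 * φ t x + 4 * K ^ 2 * τ ^ 2) →
      √(∫ x in (0 : ℝ)..L, v x ^ 2) ≤ √D * τ := fun v hv hvle => by
    refine Real.sqrt_le_iff.2 ⟨mul_nonneg (Real.sqrt_nonneg D) hτ.1.le, ?_⟩
    rw [mul_pow, Real.sq_sqrt hD0]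
    refine le_trans (intervalIntegral.integral_mono_on hL.le ((hv.pow 2).intervalIntegrable _ _)
      (Continuous.intervalIntegrable ?_ _ _) fun x _ => hvle x) hbound
    exact (continuous_const.mul (hcont hφ)).add continuous_const
  have h₀ := hsqrt (fun x => u t x - q₀ t x) ((hcont hu1).sub (hcont hq₀)) fun x => by
    nlinarith [hlower t x, sq_nonneg (q₁ t x - w t x)]
  have h₁ := hsqrt (fun x => w t x - q₁ t x) ((hcont hw1).sub (hcont hq₁)) fun x => by
    nlinarith [hlower t x, sq_nonneg (q₀ t x - u t x)]
  calc _ ≤ √D * τ + √D * τ := add_le_add h₀ h₁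
    _ ≤ (2 * √D + 1) * τ := by linarith [hτ.1]
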